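/- For n ≥ 2 and k ≥ 1, the polynomial c_n^{(k)}(x) = Σ_{π ∈ Q̃_n(k)} x^{ap(π)}, summed over k-Stirling permutations of order n whose first letter is 1, is γ-positive: c_n^{(k)}(x) = Σ_{i=1}^{⌊n/2⌋} γ̃_{n,k,i} x^i (1+x)^{n−2i}, where γ̃_{n,k,i} is the number of increasing pruned even k-ary trees on {1,...,n} with i labeled leaves and no young leaves. -/

import Mathlib

open Polynomial
open scoped Classical

noncomputable section

/-- Number of longest ascent-plateaux of the length-`L` word `v` (values in `ℕ`):
indices `i` with `v i < v (i+1) = v (i+2) = ⋯ = v (i+k)`. -/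
def apWord (k L : ℕ) (v : ℕ → ℕ) : ℕ :=
  ((Finset.range L).filter fun i =>
    i + k < L ∧ v i < v (i + 1) ∧ ∀ j < k, v (i + 1 + j) = v (i + 1)).card

/-- `w : Fin (k*n) → Fin n` is a `k`-Stirling permutation of order `n`: every letter
occurs exactly `k` times and letters lying between two equal letters are at least as
large. -/
def IsKStirling (k n : ℕ) (w : Fin (k * n) → Fin n) : Prop :=
  (∀ m : Fin n, (Finset.univ.filter fun i => w i = m).card = k) ∧
  (∀ i j l : Fin (k * n), i ≤ j → j ≤ l → w i = w l → w i ≤ w j)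

/-- The word (with values in `{1,…,n}` and junk value `0` out of range) associated to a
`k`-Stirling permutation. -/
def wordOf (k n : ℕ) (w : Fin (k * n) → Fin n) : ℕ → ℕ :=
  fun i => if h : i < k * n then (w ⟨i, h⟩ : ℕ) + 1 else 0

/-- The number `ap(π)` of longest ascent-plateaux of a `k`-Stirling permutation. -/
def apStat (k n : ℕ) (w : Fin (k * n) → Fin n) : ℕ :=
  apWord k (k * n) (wordOf k n w)

/-- The number `lap(π)` of left longest ascent-plateaux: longest ascent-plateaux of the
word `0π` obtained by prepending a zero. -/
def lapStat (k n : ℕ) (w : Fin (k * n) → Fin n) : ℕ :=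
  apWord k (k * n + 1) (fun i => if i = 0 then 0 else wordOf k n w (i - 1))

/-!  Increasing pruned even `k`-ary forests on a linearly ordered label set `α` are
encoded by parent functions `f : α → Option (α × Fin k)`: `f x = some (y, s)` means the
labeled node `x` is attached to the `s`-th (unlabeled) child of the labeled node `y`,
and `f x = none` means `x` is the root of a component.  The increasing condition says
that labels of the children of each node increase, so the ordered-tree structure is
determined by `f`; components are ordered by their (increasing) root labels.  -/

/-- The labeled node `u` has a labeled grand child (so it is an internal labeled node
carrying its `k` unlabeled children in the pruned tree). -/
def hasChild {α : Type} {k : ℕ} (f : α → Option (α × Fin k)) (u : α) : Prop :=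
  ∃ x s, f x = some (u, s)

/-- `f` encodes an increasing pruned even `k`-ary forest: parents carry smaller labels. -/
def IsForest {α : Type} [LT α] {k : ℕ} (f : α → Option (α × Fin k)) : Prop :=
  ∀ x y s, f x = some (y, s) → y < x

/-- `f` encodes an increasing pruned even `k`-ary tree: a forest with a unique root. -/
def IsTree {α : Type} [LT α] {k : ℕ} (f : α → Option (α × Fin k)) : Prop :=
  IsForest f ∧ ∃! r, f r = none

/-- `lleaf`: the number of labeled leaves. -/
noncomputable def lleafStat {α : Type} [Fintype α] {k : ℕ}
    (f : α → Option (α × Fin k)) : ℕ :=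
  (Finset.univ.filter fun u => ¬ hasChild f u).card

/-- `si`: the number of singleton components (roots that are leaves). -/
noncomputable def siStat {α : Type} [Fintype α] {k : ℕ}
    (f : α → Option (α × Fin k)) : ℕ :=
  (Finset.univ.filter fun u => f u = none ∧ ¬ hasChild f u).card

/-- A non-root labeled node is old if it carries the greatest label among all the
grand children of its grand parent. -/
def oldNode {α : Type} [LinearOrder α] {k : ℕ}
    (f : α → Option (α × Fin k)) (v : α) : Prop :=
  ∃ y s, f v = some (y, s) ∧ ∀ x : α, (∃ t, f x = some (y, t)) → x ≤ v

/-- A non-root labeled node that is not old is young. -/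
def youngNode {α : Type} [LinearOrder α] {k : ℕ}
    (f : α → Option (α × Fin k)) (v : α) : Prop :=
  (∃ y s, f v = some (y, s)) ∧ ¬ oldNode f v

/-- `oleaf`: the number of old labeled leaves. -/
noncomputable def oleafStat {α : Type} [LinearOrder α] [Fintype α] {k : ℕ}
    (f : α → Option (α × Fin k)) : ℕ :=
  (Finset.univ.filter fun v => oldNode f v ∧ ¬ hasChild f v).card

/-- `oint`: the number of old internal labeled nodes. -/
noncomputable def ointStat {α : Type} [LinearOrder α] [Fintype α] {k : ℕ}
    (f : α → Option (α × Fin k)) : ℕ :=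
  (Finset.univ.filter fun v => oldNode f v ∧ hasChild f v).card

/-- `F` has no young leaves. -/
def NoYoungLeaf {α : Type} [LinearOrder α] {k : ℕ}
    (f : α → Option (α × Fin k)) : Prop :=
  ∀ v : α, ¬ (youngNode f v ∧ ¬ hasChild f v)

/-- The generalized Foata–Strehl transformation `Φ_v`.  If `v` is an old internal node
with grand parent `u`, the subtrees hanging from the `k` children of `v` are transferred
(slotwise) to the corresponding children of `u`, turning `v` into a leaf; if `v` is a
young leaf, all subtrees hanging from the children of `u` whose root labels exceed `v`
are transferred (slotwise) to `k` freshly attached children of `v`; otherwise nothing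
happens. -/
noncomputable def phi {α : Type} [LinearOrder α] {k : ℕ} (v : α)
    (f : α → Option (α × Fin k)) : α → Option (α × Fin k) :=
  match f v with
  | none => f
  | some (u, _) =>
    if ∀ x : α, (∃ t, f x = some (u, t)) → x ≤ v then
      -- `v` is old
      if hasChild f v then
        (fun x => match f x with
          | some (w, j) => if w = v then some (u, j) else some (w, j)
          | none => none)
      else f
    else
      -- `v` is young
      if hasChild f v then f
      else
        (fun x => match f x with
          | some (w, j) => if w = u ∧ v < x then some (v, j) else some (w, j)
          | none => none)

/-- `u` is a removable old leaf of the forest `f`: an old leaf that is a grand child of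
the root `r` of its component, the only leaf among the grand children of `r`, the first
`k-1` children of `r` are leaves, and the label of `u` is smaller than the label of
every later root. -/
def removableOldLeaf {α : Type} [LinearOrder α] {k : ℕ}
    (f : α → Option (α × Fin k)) (u : α) : Prop :=
  oldNode f u ∧ ¬ hasChild f u ∧
  ∃ (r : α) (s : Fin k), f u = some (r, s) ∧ f r = none ∧
    (∀ x : α, (∃ t, f x = some (r, t)) → x ≠ u → hasChild f x) ∧
    (∀ (x : α) (j : Fin k), (j : ℕ) < k - 1 → f x ≠ some (r, j)) ∧
    (∀ r' : α, f r' = none → r < r' → u < r')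

/-- `u` is a removable young leaf of the forest `f`: a young leaf that is a grand child
of the root `r` of the rightmost component such that after applying `Φ_u` the first
`k-1` children of `r` are leaves. -/
noncomputable def removableYoungLeaf {α : Type} [LinearOrder α] {k : ℕ}
    (f : α → Option (α × Fin k)) (u : α) : Prop :=
  youngNode f u ∧ ¬ hasChild f u ∧
  ∃ (r : α) (s : Fin k), f u = some (r, s) ∧ f r = none ∧
    (∀ r' : α, f r' = none → r' ≤ r) ∧
    (∀ (x : α) (j : Fin k), (j : ℕ) < k - 1 → phi u f x ≠ some (r, j))

/-- The forest lies in the class `\overline{𝓕}_n(k)`: the rightmost tree is a singleton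
or the first `k-1` children of its root are leaves. -/
def inBarClass {α : Type} [LinearOrder α] {k : ℕ}
    (f : α → Option (α × Fin k)) : Prop :=
  ∃ r : α, f r = none ∧ (∀ r' : α, f r' = none → r' ≤ r) ∧
    (¬ hasChild f r ∨
      ∀ (x : α) (j : Fin k), (j : ℕ) < k - 1 → f x ≠ some (r, j))

/-! ### Trees -/

def oldLeaves {n k : ℕ} (f : Fin n → Option (Fin n × Fin k)) : Finset (Fin n) :=
  Finset.univ.filter fun v => oldNode f v ∧ ¬ hasChild f v

def youngLeaves {n k : ℕ} (f : Fin n → Option (Fin n × Fin k)) : Finset (Fin n) :=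
  Finset.univ.filter fun v => youngNode f v ∧ ¬ hasChild f v

/-- Nodes having an old leaf as grand child. -/
def oldLeafParents {n k : ℕ} (f : Fin n → Option (Fin n × Fin k)) : Finset (Fin n) :=
  Finset.univ.filter fun y => ∃ v ∈ oldLeaves f, ∃ s, f v = some (y, s)

lemma disjoint_at {α : Type} {s t : Finset α} (h : Disjoint s t) (y : α) : y ∈ s → y ∉ t :=
  fun h' => Finset.disjoint_left.1 h h'

lemma mem_oldLeaves {n k : ℕ} (f : Fin n → Option (Fin n × Fin k)) (v : Fin n) :
    v ∈ oldLeaves f ↔ oldNode f v ∧ ¬ hasChild f v := by simp [oldLeaves]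

lemma mem_youngLeaves {n k : ℕ} (f : Fin n → Option (Fin n × Fin k)) (v : Fin n) :
    v ∈ youngLeaves f ↔ ((∃ y s, f v = some (y, s)) ∧ ¬ oldNode f v) ∧ ¬ hasChild f v := by
  rw [youngLeaves, Finset.mem_filter]
  simp [youngNode]

/-- Attach a new largest node below slot `s` of `y`. -/
def insT {n k : ℕ} (f : Fin n → Option (Fin n × Fin k)) (y : Fin n) (s : Fin k) :
    Fin (n + 1) → Option (Fin (n + 1) × Fin k) :=
  Fin.lastCases (some (y.castSucc, s)) (fun x => (f x).map fun q => (q.1.castSucc, q.2))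

lemma insT_last {n k : ℕ} (f : Fin n → Option (Fin n × Fin k)) (y : Fin n) (s : Fin k) :
    insT f y s (Fin.last n) = some (y.castSucc, s) := by simp [insT]

lemma insT_castSucc {n k : ℕ} (f : Fin n → Option (Fin n × Fin k)) (y : Fin n) (s : Fin k)
    (x : Fin n) :
    insT f y s x.castSucc = (f x).map fun q => (q.1.castSucc, q.2) := by simp [insT]

lemma insT_castSucc_eq {n k : ℕ} (f : Fin n → Option (Fin n × Fin k)) (y : Fin n) (s : Fin k)
    (x u : Fin n) (t : Fin k) :
    insT f y s x.castSucc = some (u.castSucc, t) ↔ f x = some (u, t) := by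
  rw [insT_castSucc]
  rcases f x with _ | ⟨a, b⟩ <;> simp [Prod.ext_iff]

lemma insT_ne_last {n k : ℕ} (f : Fin n → Option (Fin n × Fin k)) (y : Fin n) (s : Fin k)
    (x : Fin (n + 1)) (t : Fin k) :
    insT f y s x ≠ some (Fin.last n, t) := by
  induction x using Fin.lastCases with
  | last =>
    rw [insT_last]
    intro h
    simp only [Option.some.injEq, Prod.mk.injEq] at h
    exact absurd h.1 (Fin.castSucc_lt_last y).ne
  | cast x =>
    rw [insT_castSucc]
    rcases f x with _ | ⟨a, b⟩
    · simp
    · intro h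
      simp only [Option.map_some, Option.some.injEq, Prod.mk.injEq] at h
      exact absurd h.1 (Fin.castSucc_lt_last a).ne

lemma insT_last_eq {n k : ℕ} (f : Fin n → Option (Fin n × Fin k)) (y : Fin n) (s : Fin k)
    (u : Fin n) (t : Fin k) :
    insT f y s (Fin.last n) = some (u.castSucc, t) ↔ y = u ∧ s = t := by
  simp [insT_last]

lemma hasChild_insT_last {n k : ℕ} (f : Fin n → Option (Fin n × Fin k)) (y : Fin n)
    (s : Fin k) : ¬ hasChild (insT f y s) (Fin.last n) := by
  rintro ⟨x, t, h⟩
  exact insT_ne_last f y s x t h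

lemma hasChild_insT {n k : ℕ} (f : Fin n → Option (Fin n × Fin k)) (y : Fin n)
    (s : Fin k) (u : Fin n) : hasChild (insT f y s) u.castSucc ↔ hasChild f u ∨ u = y := by
  constructor
  · rintro ⟨x, t, h⟩
    induction x using Fin.lastCases with
    | last => exact Or.inr ((insT_last_eq f y s u t).1 h).1.symm
    | cast x => exact Or.inl ⟨x, t, (insT_castSucc_eq f y s x u t).1 h⟩
  · rintro (⟨x, t, h⟩ | rfl)
    · exact ⟨x.castSucc, t, (insT_castSucc_eq f y s x u t).2 h⟩
    · exact ⟨Fin.last n, s, (insT_last_eq f u s u s).2 ⟨rfl, rfl⟩⟩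

lemma oldNode_insT_last {n k : ℕ} (f : Fin n → Option (Fin n × Fin k)) (y : Fin n)
    (s : Fin k) : oldNode (insT f y s) (Fin.last n) :=
  ⟨y.castSucc, s, insT_last f y s, fun x _ => Fin.le_last x⟩

lemma oldNode_insT {n k : ℕ} (f : Fin n → Option (Fin n × Fin k)) (y : Fin n)
    (s : Fin k) (v : Fin n) : oldNode (insT f y s) v.castSucc ↔
      oldNode f v ∧ ¬ ∃ t, f v = some (y, t) := by
  constructor
  · rintro ⟨u, t, h, hx⟩
    induction u using Fin.lastCases with
    | last => exact absurd h (insT_ne_last f y s _ t)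
    | cast u =>
      have h' := (insT_castSucc_eq f y s v u t).1 h
      refine ⟨⟨u, t, h', fun x ⟨t', hx'⟩ => ?_⟩, ?_⟩
      · have := hx x.castSucc ⟨t', (insT_castSucc_eq f y s x u t').2 hx'⟩
        simpa using this
      · rintro ⟨t', h2⟩
        rw [h'] at h2
        simp only [Option.some.injEq, Prod.mk.injEq] at h2
        have := hx (Fin.last n) ⟨s, (insT_last_eq f y s u s).2 ⟨h2.1.symm, rfl⟩⟩
        exact absurd this (not_le.2 (Fin.castSucc_lt_last v))
  · rintro ⟨⟨u, t, h, hx⟩, hn⟩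
    refine ⟨u.castSucc, t, (insT_castSucc_eq f y s v u t).2 h, ?_⟩
    rintro x ⟨t', hx'⟩
    induction x using Fin.lastCases with
    | last =>
      have := ((insT_last_eq f y s u t').1 hx').1
      subst this
      exact absurd ⟨t, h⟩ hn
    | cast x => simpa using hx x ⟨t', (insT_castSucc_eq f y s x u t').1 hx'⟩

lemma nonroot_insT {n k : ℕ} (f : Fin n → Option (Fin n × Fin k)) (y : Fin n)
    (s : Fin k) (v : Fin n) : (∃ u t, insT f y s v.castSucc = some (u, t)) ↔
      ∃ u t, f v = some (u, t) := by
  rw [insT_castSucc]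
  rcases f v with _ | ⟨a, b⟩ <;> simp

lemma oldLeaves_insT {n k : ℕ} (f : Fin n → Option (Fin n × Fin k)) (y : Fin n) (s : Fin k) :
    oldLeaves (insT f y s) = insert (Fin.last n)
      (((oldLeaves f).filter fun v => v ≠ y ∧ ¬ ∃ t, f v = some (y, t)).map Fin.castSuccEmb) := by
  ext x
  induction x using Fin.lastCases with
  | last => simp [oldLeaves, oldNode_insT_last, hasChild_insT_last]
  | cast x =>
    have : x.castSucc ≠ Fin.last n := (Fin.castSucc_lt_last x).ne
    simp [oldLeaves, oldNode_insT, hasChild_insT, this]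
    tauto

lemma youngLeaves_insT {n k : ℕ} (f : Fin n → Option (Fin n × Fin k)) (y : Fin n) (s : Fin k) :
    youngLeaves (insT f y s) = 
      (((youngLeaves f ∪ (oldLeaves f).filter fun v => ∃ t, f v = some (y, t)).filter
        fun v => v ≠ y).map Fin.castSuccEmb) := by
  ext x
  induction x using Fin.lastCases with
  | last => 
    rw [mem_youngLeaves]
    simp [oldNode_insT_last]
  | cast x =>
    have h : oldNode f x → ∃ u t, f x = some (u, t) := fun ⟨u, t, h, _⟩ => ⟨u, t, h⟩
    have h2 : (∃ t, f x = some (y, t)) → ∃ u t, f x = some (u, t) := fun ⟨t, h⟩ => ⟨y, t, h⟩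
    simp only [mem_youngLeaves, mem_oldLeaves, nonroot_insT, oldNode_insT, hasChild_insT,
      Finset.mem_filter, Finset.mem_map, Finset.mem_union]
    constructor
    · intro h'
      refine ⟨x, ?_, rfl⟩
      obtain ⟨⟨h3, h4⟩, h5⟩ := h'
      rw [not_or] at h5
      by_cases ho : oldNode f x
      · exact ⟨Or.inr ⟨⟨ho, h5.1⟩, by_contra fun h6 => h4 ⟨ho, h6⟩⟩, h5.2⟩
      · exact ⟨Or.inl ⟨⟨h3, ho⟩, h5.1⟩, h5.2⟩
    · rintro ⟨a, h', ha⟩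
      have : a = x := by simpa using ha
      subst this
      tauto

lemma card_oldLeafParents {n k : ℕ} (f : Fin n → Option (Fin n × Fin k)) :
    (oldLeafParents f).card = (oldLeaves f).card := by
  symm
  have key : ∀ v, ∃ u : Fin n, v ∈ oldLeaves f → (∃ t, f v = some (u, t)) ∧
      ∀ x : Fin n, (∃ t, f x = some (u, t)) → x ≤ v := by
    intro v
    by_cases hv : v ∈ oldLeaves f
    · obtain ⟨u, t, h1, h2⟩ := ((mem_oldLeaves f v).1 hv).1
      exact ⟨u, fun _ => ⟨⟨t, h1⟩, h2⟩⟩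
    · exact ⟨v, fun h => absurd h hv⟩
  choose p hpx using key
  have hp := fun v hv => (hpx v hv).1
  have hx := fun v hv => (hpx v hv).2
  refine Finset.card_bij (fun v _ => p v) ?_ ?_ ?_
  · intro v hv
    simp only [oldLeafParents, Finset.mem_filter, Finset.mem_univ, true_and]
    exact ⟨v, hv, hp v hv⟩
  · intro v hv w hw h
    apply le_antisymm
    · exact hx w hw v (h ▸ hp v hv)
    · exact hx v hv w (h ▸ hp w hw)
  · intro y hy
    simp only [oldLeafParents, Finset.mem_filter, Finset.mem_univ, true_and] at hy
    obtain ⟨v, hv, s, hs⟩ := hy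
    refine ⟨v, hv, ?_⟩
    obtain ⟨t, this⟩ := hp v hv
    rw [hs] at this
    simp only [Option.some.injEq, Prod.mk.injEq] at this
    exact this.1.symm

lemma old_children_empty {n k : ℕ} (f : Fin n → Option (Fin n × Fin k)) (y : Fin n)
    (hy : y ∉ oldLeafParents f) : ∀ v ∈ oldLeaves f, ¬ ∃ t, f v = some (y, t) := by
  intro v hv h
  exact hy (by simp only [oldLeafParents, Finset.mem_filter, Finset.mem_univ, true_and]
               exact ⟨v, hv, h⟩)

lemma old_children_single {n k : ℕ} (f : Fin n → Option (Fin n × Fin k)) (y : Fin n)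
    (hy : y ∈ oldLeafParents f) : ∃ z ∈ oldLeaves f, ∀ v ∈ oldLeaves f,
      (∃ t, f v = some (y, t)) ↔ v = z := by
  simp only [oldLeafParents, Finset.mem_filter, Finset.mem_univ, true_and] at hy
  obtain ⟨z, hz, hy⟩ := hy
  have hold : ∀ z ∈ oldLeaves f, (∃ t, f z = some (y, t)) →
      ∀ x : Fin n, (∃ t, f x = some (y, t)) → x ≤ z := by
    rintro z hz ⟨s, hs⟩
    simp only [oldLeaves, Finset.mem_filter] at hz
    obtain ⟨u, t, h1, h2⟩ := hz.2.1
    rw [hs] at h1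
    simp only [Option.some.injEq, Prod.mk.injEq] at h1
    rw [h1.1]; exact h2
  refine ⟨z, hz, fun v hv => ⟨fun h => ?_, fun h => h ▸ hy⟩⟩
  exact le_antisymm (hold z hz hy v h) (hold v hv h z hy)

lemma mem_oldLeafParents_hasChild {n k : ℕ} (f : Fin n → Option (Fin n × Fin k)) (y : Fin n)
    (hy : y ∈ oldLeafParents f) : hasChild f y := by
  simp only [oldLeafParents, Finset.mem_filter, Finset.mem_univ, true_and] at hy
  obtain ⟨v, _, s, h⟩ := hy
  exact ⟨v, s, h⟩

lemma disj_OY {n k : ℕ} (f : Fin n → Option (Fin n × Fin k)) :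
    Disjoint (oldLeaves f) (youngLeaves f) := by
  rw [Finset.disjoint_left]
  intro y h1 h2
  rw [mem_oldLeaves] at h1
  rw [mem_youngLeaves] at h2
  tauto

lemma disj_OP {n k : ℕ} (f : Fin n → Option (Fin n × Fin k)) :
    Disjoint (oldLeaves f) (oldLeafParents f) := by
  rw [Finset.disjoint_left]
  intro y h1 h2
  have := mem_oldLeafParents_hasChild f y h2
  simp only [oldLeaves, Finset.mem_filter] at h1
  tauto

lemma disj_YP {n k : ℕ} (f : Fin n → Option (Fin n × Fin k)) :
    Disjoint (youngLeaves f) (oldLeafParents f) := by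
  rw [Finset.disjoint_left]
  intro y h1 h2
  have := mem_oldLeafParents_hasChild f y h2
  simp only [youngLeaves, Finset.mem_filter] at h1
  tauto

lemma card_old_notP {n k : ℕ} (f : Fin n → Option (Fin n × Fin k)) (y : Fin n) (s : Fin k)
    (hy : y ∉ oldLeafParents f) :
    (oldLeaves (insT f y s)).card = ((oldLeaves f).erase y).card + 1 := by
  rw [oldLeaves_insT, Finset.card_insert_of_notMem (by
    simp only [Finset.mem_map, not_exists, not_and]
    intro x _ h
    exact (Fin.castSucc_lt_last x).ne h), Finset.card_map]
  congr 2
  ext v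
  have := old_children_empty f y hy v
  simp only [Finset.mem_filter, Finset.mem_erase]
  tauto

lemma card_young_notP {n k : ℕ} (f : Fin n → Option (Fin n × Fin k)) (y : Fin n) (s : Fin k)
    (hy : y ∉ oldLeafParents f) :
    (youngLeaves (insT f y s)).card = ((youngLeaves f).erase y).card := by
  rw [youngLeaves_insT, Finset.card_map]
  congr 1
  ext v
  have := old_children_empty f y hy v
  simp only [Finset.mem_filter, Finset.mem_erase, Finset.mem_union]
  tauto

lemma card_old_P {n k : ℕ} (f : Fin n → Option (Fin n × Fin k)) (y : Fin n) (s : Fin k)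
    (hy : y ∈ oldLeafParents f) :
    (oldLeaves (insT f y s)).card = (oldLeaves f).card := by
  rw [oldLeaves_insT, Finset.card_insert_of_notMem (by
    simp only [Finset.mem_map, not_exists, not_and]
    intro x _ h
    exact (Fin.castSucc_lt_last x).ne h), Finset.card_map]
  obtain ⟨z, hz, h⟩ := old_children_single f y hy
  have hyO : y ∉ oldLeaves f := fun h => Finset.disjoint_left.1 (disj_OP f) h hy
  rw [← Finset.card_erase_add_one hz]
  congr 2
  ext v
  have := h v
  simp only [Finset.mem_filter, Finset.mem_erase]
  constructor
  · tauto
  · rintro ⟨h1, h2⟩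
    refine ⟨h2, ?_, by tauto⟩
    rintro rfl; exact hyO h2

lemma card_young_P {n k : ℕ} (f : Fin n → Option (Fin n × Fin k)) (y : Fin n) (s : Fin k)
    (hy : y ∈ oldLeafParents f) :
    (youngLeaves (insT f y s)).card = (youngLeaves f).card + 1 := by
  rw [youngLeaves_insT, Finset.card_map]
  obtain ⟨z, hz, h⟩ := old_children_single f y hy
  have hyO : y ∉ oldLeaves f := fun h => Finset.disjoint_left.1 (disj_OP f) h hy
  have hyY : y ∉ youngLeaves f := fun h => Finset.disjoint_left.1 (disj_YP f) h hy
  have hzY : z ∉ youngLeaves f := fun h => Finset.disjoint_left.1 (disj_OY f) hz h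
  rw [← Finset.card_insert_of_notMem hzY]
  congr 1
  ext v
  have := h v
  simp only [Finset.mem_filter, Finset.mem_insert, Finset.mem_union]
  constructor
  · tauto
  · rintro (rfl | h2)
    · exact ⟨Or.inr ⟨hz, by tauto⟩, fun h => hyO (h ▸ hz)⟩
    · exact ⟨Or.inl h2, fun h => hyY (h ▸ h2)⟩

/-- The insertion map on trees is a bijection. -/
lemma insT_isTree {n k : ℕ} (f : Fin n → Option (Fin n × Fin k)) (hf : IsTree f)
    (y : Fin n) (s : Fin k) : IsTree (insT f y s) := by
  obtain ⟨h1, r, hr, hu⟩ := hf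
  refine ⟨?_, r.castSucc, by simp [insT_castSucc, hr], ?_⟩
  · intro x u t h
    induction u using Fin.lastCases with
    | last => exact absurd h (insT_ne_last f y s _ t)
    | cast u =>
      induction x using Fin.lastCases with
      | last => exact Fin.castSucc_lt_last u
      | cast x => simpa using h1 x u t ((insT_castSucc_eq f y s x u t).1 h)
  · intro x hx
    induction x using Fin.lastCases with
    | last => simp [insT_last] at hx
    | cast x =>
      simp only [insT_castSucc, Option.map_eq_none_iff] at hx
      rw [hu x hx]

lemma insT_inj {n k : ℕ} {f g : Fin n → Option (Fin n × Fin k)} {y z : Fin n} {s t : Fin k}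
    (h : insT f y s = insT g z t) : f = g ∧ y = z ∧ s = t := by
  refine ⟨?_, ?_⟩
  · funext x
    have := congrFun h x.castSucc
    rw [insT_castSucc, insT_castSucc] at this
    refine Option.map_injective ?_ this
    rintro ⟨a, b⟩ ⟨c, d⟩ h
    simpa using h
  · have := congrFun h (Fin.last n)
    simpa [insT_last] using this

lemma insT_surj {n k : ℕ} (hn : 1 ≤ n) (g : Fin (n + 1) → Option (Fin (n + 1) × Fin k))
    (hg : IsTree g) : ∃ f y s, IsTree f ∧ insT f y s = g := by
  obtain ⟨h1, r, hr, hu⟩ := hg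
  have h0 : g 0 = none := by
    rcases h : g 0 with _ | ⟨y, s⟩
    · rfl
    · exact absurd (h1 _ _ _ h) (Fin.not_lt_zero y)
  have hr0 : r = 0 := (hu 0 h0).symm
  subst hr0
  have hlast : ∃ y s, g (Fin.last n) = some (y, s) := by
    rcases h : g (Fin.last n) with _ | ⟨y, s⟩
    · have := hu _ h
      simp [Fin.ext_iff] at this
      omega
    · exact ⟨y, s, rfl⟩
  obtain ⟨y, s, hys⟩ := hlast
  have hy := h1 _ _ _ hys
  have hex : ∀ x : Fin n, ∃ q : Option (Fin n × Fin k),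
      g x.castSucc = q.map fun q => (q.1.castSucc, q.2) := by
    intro x
    rcases h : g x.castSucc with _ | ⟨u, t⟩
    · exact ⟨none, rfl⟩
    · have := h1 _ _ _ h
      have hul : u < Fin.last n := this.trans (Fin.castSucc_lt_last x)
      exact ⟨some (u.castPred hul.ne, t), by simp⟩
  choose f hf using hex
  have hEq : insT f (y.castPred hy.ne) s = g := by
    funext x
    induction x using Fin.lastCases with
    | last => rw [insT_last, hys]; simp
    | cast x => rw [insT_castSucc, hf]
  refine ⟨f, _, s, ⟨?_, ⟨0, by omega⟩, ?_, ?_⟩, hEq⟩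
  · intro x u t h
    have := h1 x.castSucc u.castSucc t (by rw [hf, h]; rfl)
    simpa using this
  · have := hf ⟨0, by omega⟩
    have h00 : (Fin.castSucc (⟨0, by omega⟩ : Fin n)) = 0 := rfl
    rw [h00, h0] at this
    exact Option.map_eq_none_iff.1 this.symm
  · intro x hx
    have := hu x.castSucc (show g x.castSucc = none by rw [hf, hx]; rfl)
    simpa [Fin.ext_iff] using this

lemma root_hasChild {n k : ℕ} (hn : 2 ≤ n) (f : Fin n → Option (Fin n × Fin k))
    (hf : IsTree f) (x : Fin n) (hx : f x = none) : hasChild f x := by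
  obtain ⟨h1, r, hr, hu⟩ := hf
  have h0 : f ⟨0, by omega⟩ = none := by
    rcases h : f ⟨0, by omega⟩ with _ | ⟨y, s⟩
    · rfl
    · have := h1 _ _ _ h
      simp [Fin.lt_def] at this
  have e0 := hu _ h0
  have ex := hu _ hx
  rcases h : f ⟨1, by omega⟩ with _ | ⟨y, s⟩
  · have := hu _ h
    rw [← e0] at this
    simp at this
  · have := h1 _ _ _ h
    have : y = x := by
      rw [ex, ← e0]
      simp [Fin.lt_def] at this
      exact Fin.ext this
    exact ⟨_, s, this ▸ h⟩

lemma card_split {n k : ℕ} (f : Fin n → Option (Fin n × Fin k)) :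
    2 * (oldLeaves f).card + (youngLeaves f).card ≤ n := by
  have h : (oldLeaves f ∪ youngLeaves f ∪ oldLeafParents f).card ≤ n := by
    simpa using Finset.card_le_univ (oldLeaves f ∪ youngLeaves f ∪ oldLeafParents f)
  rw [Finset.card_union_of_disjoint (Finset.disjoint_union_left.2 ⟨disj_OP f, disj_YP f⟩),
    Finset.card_union_of_disjoint (disj_OY f), card_oldLeafParents] at h
  omega

/-- One step of the insertion recursion, inner sum. -/
lemma insT_inner_sum {R : Type} [CommSemiring R] {n k : ℕ} (f : Fin n → Option (Fin n × Fin k))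
    (φ : ℕ → ℕ → R) :
    ∑ q : Fin n × Fin k, φ (oldLeaves (insT f q.1 q.2)).card (youngLeaves (insT f q.1 q.2)).card
    = (k : R) * (((oldLeaves f).card : R) * φ (oldLeaves f).card (youngLeaves f).card
      + ((youngLeaves f).card : R) * φ ((oldLeaves f).card + 1) ((youngLeaves f).card - 1)
      + ((oldLeaves f).card : R) * φ (oldLeaves f).card ((youngLeaves f).card + 1)
      + ((n - 2 * (oldLeaves f).card - (youngLeaves f).card : ℕ) : R) *
          φ ((oldLeaves f).card + 1) (youngLeaves f).card) := by
  set a := (oldLeaves f).card with ha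
  set b := (youngLeaves f).card with hb
  let ψ : Fin n → R := fun y =>
      if y ∈ oldLeaves f then φ a b else if y ∈ youngLeaves f then φ (a + 1) (b - 1) else
        if y ∈ oldLeafParents f then φ a (b + 1) else φ (a + 1) b
  have hval : ∀ q : Fin n × Fin k,
      φ (oldLeaves (insT f q.1 q.2)).card (youngLeaves (insT f q.1 q.2)).card =
      ψ q.1 := by
    rintro ⟨y, s⟩
    simp only [ψ]
    by_cases hP : y ∈ oldLeafParents f
    · have hyO : y ∉ oldLeaves f := fun h => Finset.disjoint_left.1 (disj_OP f) h hP
      have hyY : y ∉ youngLeaves f := fun h => Finset.disjoint_left.1 (disj_YP f) h hP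
      rw [card_old_P f y s hP, card_young_P f y s hP, if_neg hyO, if_neg hyY, if_pos hP]
    · rw [card_old_notP f y s hP, card_young_notP f y s hP]
      by_cases hO : y ∈ oldLeaves f
      · have hyY : y ∉ youngLeaves f := fun h => Finset.disjoint_left.1 (disj_OY f) hO h
        rw [if_pos hO, Finset.card_erase_add_one hO, Finset.erase_eq_of_notMem hyY]
      · rw [if_neg hO, Finset.erase_eq_of_notMem hO]
        by_cases hY : y ∈ youngLeaves f
        · rw [if_pos hY, Finset.card_erase_of_mem hY]
        · rw [if_neg hY, if_neg hP, Finset.erase_eq_of_notMem hY]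
  rw [Finset.sum_congr rfl fun q _ => hval q, Fintype.sum_prod_type]
  simp only [Finset.sum_const, Finset.card_univ, Fintype.card_fin, nsmul_eq_mul]
  rw [← Finset.mul_sum]
  congr 1
  have e1 : ∀ y : Fin n, ψ y =
      (if y ∈ oldLeaves f then φ a b else 0) + (if y ∈ youngLeaves f then φ (a + 1) (b - 1) else 0)
      + (if y ∈ oldLeafParents f then φ a (b + 1) else 0) +
      (if y ∈ (oldLeaves f ∪ youngLeaves f ∪ oldLeafParents f)ᶜ then φ (a + 1) b else 0) := by
    intro y
    simp only [ψ]
    have h1 := disjoint_at (disj_OP f) y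
    have h2 := disjoint_at (disj_YP f) y
    have h3 := disjoint_at (disj_OY f) y
    by_cases hO : y ∈ oldLeaves f <;> by_cases hY : y ∈ youngLeaves f <;>
      by_cases hP : y ∈ oldLeafParents f <;> simp_all
  rw [Finset.sum_congr rfl fun q _ => e1 q]
  simp only [Finset.sum_add_distrib, Finset.sum_ite_mem, Finset.univ_inter, Finset.sum_const,
    nsmul_eq_mul]
  rw [Finset.card_compl, 
    Finset.card_union_of_disjoint (Finset.disjoint_union_left.2 ⟨disj_OP f, disj_YP f⟩),
    Finset.card_union_of_disjoint (disj_OY f), card_oldLeafParents, Fintype.card_fin, ← ha, ← hb]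
  have e : n - (a + b + a) = n - 2 * a - b := by omega
  rw [e]

lemma tree_sum {R : Type} [CommSemiring R] {n k : ℕ} (hn : 1 ≤ n)
    (F : (Fin (n + 1) → Option (Fin (n + 1) × Fin k)) → R) :
    ∑ g : {g : Fin (n + 1) → Option (Fin (n + 1) × Fin k) // IsTree g}, F g.1 =
    ∑ f : {f : Fin n → Option (Fin n × Fin k) // IsTree f}, ∑ q : Fin n × Fin k,
      F (insT f.1 q.1 q.2) := by
  rw [← Fintype.sum_prod_type']
  symm
  refine Fintype.sum_bijective
    (fun q : {f : Fin n → Option (Fin n × Fin k) // IsTree f} × (Fin n × Fin k) =>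
      (⟨insT q.1.1 q.2.1 q.2.2, insT_isTree _ q.1.2 _ _⟩ :
        {g : Fin (n + 1) → Option (Fin (n + 1) × Fin k) // IsTree g})) ⟨?_, ?_⟩ _ _ ?_
  · rintro ⟨⟨f, hf⟩, y, s⟩ ⟨⟨g, hg⟩, z, t⟩ h
    have := insT_inj (Subtype.ext_iff.1 h)
    simp only [Prod.mk.injEq, Subtype.mk.injEq]
    exact this
  · rintro ⟨g, hg⟩
    obtain ⟨f, y, s, hf, h⟩ := insT_surj hn g hg
    exact ⟨⟨⟨f, hf⟩, y, s⟩, Subtype.ext h⟩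
  · intro q; rfl

lemma tree_one_sum {R : Type} [CommSemiring R] {k : ℕ} (φ : ℕ → ℕ → R) :
    ∑ f : {f : Fin 1 → Option (Fin 1 × Fin k) // IsTree f},
      φ (oldLeaves f.1).card (youngLeaves f.1).card = φ 0 0 := by
  have key : ∀ f : Fin 1 → Option (Fin 1 × Fin k), IsTree f ↔ f = fun _ => none := by
    intro f
    constructor
    · rintro ⟨_, r, hr, _⟩
      funext x
      rw [Subsingleton.elim x r, hr]
    · rintro rfl
      exact ⟨by intro x y s h; simp at h, 0, rfl, fun _ _ => Subsingleton.elim _ _⟩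
  have hO : oldLeaves (fun _ : Fin 1 => (none : Option (Fin 1 × Fin k))) = ∅ := by
    ext x; simp [oldLeaves, oldNode]
  have hY : youngLeaves (fun _ : Fin 1 => (none : Option (Fin 1 × Fin k))) = ∅ := by
    ext x; simp [youngLeaves, youngNode]
  rw [Fintype.sum_eq_single (⟨fun _ => none, (key _).2 rfl⟩ :
    {f : Fin 1 → Option (Fin 1 × Fin k) // IsTree f})]
  · rw [hO, hY]; rfl
  · intro f hf
    exact absurd (Subtype.ext ((key _).1 f.2)) hf

/-- Sum over trees of a function of the numbers of old and young leaves. -/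
def treeSum {R : Type} [CommSemiring R] (n k : ℕ) (φ : ℕ → ℕ → R) : R :=
  ∑ f : {f : Fin n → Option (Fin n × Fin k) // IsTree f},
      φ (oldLeaves f.1).card (youngLeaves f.1).card

lemma treeSum_succ {R : Type} [CommSemiring R] {n k : ℕ} (hn : 1 ≤ n) (φ : ℕ → ℕ → R) :
    treeSum (n + 1) k φ = treeSum n k fun a b => (k : R) * ((a : R) * φ a b
      + (b : R) * φ (a + 1) (b - 1) + (a : R) * φ a (b + 1)
      + ((n - 2 * a - b : ℕ) : R) * φ (a + 1) b) := by
  unfold treeSum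
  rw [tree_sum hn (fun g => φ (oldLeaves g).card (youngLeaves g).card)]
  exact Finset.sum_congr rfl fun f _ => insT_inner_sum f.1 φ

lemma treeSum_two {R : Type} [CommSemiring R] {k : ℕ} (φ : ℕ → ℕ → R) :
    treeSum 2 k φ = (k : R) * φ 1 0 := by
  rw [treeSum_succ le_rfl, treeSum, tree_one_sum (fun a b => (k : R) * ((a : R) * φ a b
      + (b : R) * φ (a + 1) (b - 1) + (a : R) * φ a (b + 1)
      + ((1 - 2 * a - b : ℕ) : R) * φ (a + 1) b))]
  simp

/-! ### Words -/

/-- Stirling words as functions on `ℕ`, with first letter `1`. -/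
def IsW (k n : ℕ) (v : ℕ → ℕ) : Prop :=
  (∀ i, i < k * n → 1 ≤ v i ∧ v i ≤ n) ∧ (∀ i, k * n ≤ i → v i = 0) ∧
  (∀ m, 1 ≤ m → m ≤ n → ((Finset.range (k * n)).filter fun i => v i = m).card = k) ∧
  (∀ i j l, i ≤ j → j ≤ l → l < k * n → v i = v l → v i ≤ v j) ∧ v 0 = 1

/-- Insert a block of `k` letters `N` at position `p`. -/
def insW (k N p : ℕ) (v : ℕ → ℕ) : ℕ → ℕ :=
  fun i => if i < p then v i else if i < p + k then N else v (i - k)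

def skip (k p : ℕ) (i : ℕ) : ℕ := if i < p then i else i + k

lemma skip_inj (k p : ℕ) : Function.Injective (skip k p) := by
  intro i j h
  simp only [skip] at h
  split_ifs at h <;> omega

lemma insW_skip (k N p : ℕ) (v : ℕ → ℕ) (i : ℕ) : insW k N p v (skip k p i) = v i := by
  simp only [insW, skip]
  split_ifs <;> first | rfl | omega | (congr 1; omega)

lemma insW_block (k N p : ℕ) (v : ℕ → ℕ) (i : ℕ) (h1 : p ≤ i) (h2 : i < p + k) :
    insW k N p v i = N := by
  simp only [insW]
  rw [if_neg (by omega), if_pos h2]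

lemma exists_skip (k p i : ℕ) (h : ¬ (p ≤ i ∧ i < p + k)) : ∃ j, skip k p j = i := by
  by_cases h' : i < p
  · exact ⟨i, by simp [skip, h']⟩
  · exact ⟨i - k, by simp only [skip]; rw [if_neg (by omega)]; omega⟩

lemma eq_insW (k N p : ℕ) (w : ℕ → ℕ) (h : ∀ i, p ≤ i → i < p + k → w i = N) :
    w = insW k N p (fun i => w (skip k p i)) := by
  funext i
  by_cases hi : p ≤ i ∧ i < p + k
  · rw [insW_block _ _ _ _ _ hi.1 hi.2, h i hi.1 hi.2]
  · obtain ⟨j, rfl⟩ := exists_skip k p i hi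
    rw [insW_skip]

lemma skip_lt {k p L i : ℕ} (hp : p ≤ L) : skip k p i < L + k ↔ i < L := by
  simp only [skip]; split_ifs <;> omega

lemma skip_le_skip {k p i j : ℕ} : skip k p i ≤ skip k p j ↔ i ≤ j := by
  simp only [skip]; split_ifs <;> omega

lemma card_skip (k N p L m : ℕ) (v : ℕ → ℕ) (hp : p ≤ L) (hm : m ≠ N) :
    ((Finset.range (L + k)).filter fun i => insW k N p v i = m).card =
    ((Finset.range L).filter fun i => v i = m).card := by
  symm
  refine Finset.card_bij (fun i _ => skip k p i) ?_ ?_ ?_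
  · intro i hi
    simp only [Finset.mem_filter, Finset.mem_range] at hi ⊢
    exact ⟨(skip_lt hp).2 hi.1, by rw [insW_skip]; exact hi.2⟩
  · intro i _ j _ h
    exact skip_inj k p h
  · intro i hi
    simp only [Finset.mem_filter, Finset.mem_range] at hi
    by_cases h : p ≤ i ∧ i < p + k
    · rw [insW_block _ _ _ _ _ h.1 h.2] at hi
      exact absurd hi.2.symm hm
    · obtain ⟨j, rfl⟩ := exists_skip k p i h
      rw [insW_skip, skip_lt hp] at hi
      exact ⟨j, by simpa using hi, rfl⟩

/-- The block letter does not occur outside of the block. -/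
lemma insW_eq_N {k N p L : ℕ} {v : ℕ → ℕ} (hp : p ≤ L) (hv : ∀ i < L, v i < N) (i : ℕ)
    (hi : i < L + k) : insW k N p v i = N ↔ p ≤ i ∧ i < p + k := by
  constructor
  · intro h
    by_contra h'
    obtain ⟨j, rfl⟩ := exists_skip k p i h'
    rw [insW_skip] at h
    have := hv j ((skip_lt hp).1 hi)
    omega
  · intro h; exact insW_block _ _ _ _ _ h.1 h.2

lemma insW_isW {k n p : ℕ} {v : ℕ → ℕ} (hv : IsW k n v) (h1 : 1 ≤ p)
    (hp : p ≤ k * n) : IsW k (n + 1) (insW k (n + 1) p v) := by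
  obtain ⟨hA, hB, hC, hD, hE⟩ := hv
  have hL : k * (n + 1) = k * n + k := by ring
  have hlt : ∀ i < k * n, v i < n + 1 := fun i hi => by have := hA i hi; omega
  rw [IsW, hL]
  refine ⟨?_, ?_, ?_, ?_, ?_⟩
  · intro i hi
    by_cases h : p ≤ i ∧ i < p + k
    · rw [insW_block _ _ _ _ _ h.1 h.2]; omega
    · obtain ⟨j, rfl⟩ := exists_skip k p i h
      rw [insW_skip]
      have := hA j ((skip_lt hp).1 hi)
      omega
  · intro i hi
    simp only [insW]
    rw [if_neg (by omega), if_neg (by omega)]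
    exact hB _ (by omega)
  · intro m hm1 hm2
    by_cases hm : m = n + 1
    · subst hm
      have : ((Finset.range (k * n + k)).filter fun i => insW k (n + 1) p v i = n + 1) =
          Finset.Ico p (p + k) := by
        ext i
        simp only [Finset.mem_filter, Finset.mem_range, Finset.mem_Ico]
        constructor
        · rintro ⟨h1, h2⟩
          exact (insW_eq_N hp hlt i h1).1 h2
        · intro h
          exact ⟨by omega, insW_block _ _ _ _ _ h.1 h.2⟩
      rw [this]; simp
    · rw [card_skip _ _ _ _ _ _ hp hm]
      exact hC m hm1 (by omega)
  · intro i j l hij hjl hl h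
    by_cases hj : p ≤ j ∧ j < p + k
    · rw [insW_block _ _ _ _ j hj.1 hj.2]
      by_cases hi : p ≤ i ∧ i < p + k
      · rw [insW_block _ _ _ _ _ hi.1 hi.2]
      · obtain ⟨i, rfl⟩ := exists_skip k p i hi
        rw [insW_skip]
        have := hlt i ((skip_lt (k := k) hp).1 (by omega))
        omega
    · by_cases hi : p ≤ i ∧ i < p + k
      · rw [insW_block _ _ _ _ i hi.1 hi.2] at h
        have := (insW_eq_N hp hlt l hl).1 h.symm
        omega
      · by_cases hl' : p ≤ l ∧ l < p + k
        · rw [insW_block _ _ _ _ l hl'.1 hl'.2] at h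
          have := (insW_eq_N hp hlt i (by omega)).1 h
          omega
        · obtain ⟨i, rfl⟩ := exists_skip k p i hi
          obtain ⟨j, rfl⟩ := exists_skip k p j hj
          obtain ⟨l, rfl⟩ := exists_skip k p l hl'
          rw [insW_skip, insW_skip] at *
          exact hD i j l (skip_le_skip.1 hij) (skip_le_skip.1 hjl) ((skip_lt hp).1 hl) h
  · simp only [insW]
    rw [if_pos (by omega)]; exact hE

lemma insW_inj {k n p q : ℕ} {v w : ℕ → ℕ} (hk : 1 ≤ k) (hv : IsW k n v) (hw : IsW k n w)
    (hp : p ≤ k * n) (hq : q ≤ k * n)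
    (h : insW k (n + 1) p v = insW k (n + 1) q w) : v = w ∧ p = q := by
  have hv' : ∀ i < k * n, v i < n + 1 := fun i hi => by have := hv.1 i hi; omega
  have hw' : ∀ i < k * n, w i < n + 1 := fun i hi => by have := hw.1 i hi; omega
  have e : p = q := by
    have h1 := (insW_eq_N (k := k) hq hw' p (by omega)).1
      (by rw [← h]; exact insW_block _ _ _ _ _ le_rfl (by omega))
    have h2 := (insW_eq_N (k := k) hp hv' q (by omega)).1
      (by rw [h]; exact insW_block _ _ _ _ _ le_rfl (by omega))
    omega
  subst e
  refine ⟨?_, rfl⟩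
  funext i
  rw [← insW_skip k (n + 1) p v i, h, insW_skip]

lemma insW_surj {k n : ℕ} (hk : 1 ≤ k) (hn : 1 ≤ n) {w : ℕ → ℕ} (hw : IsW k (n + 1) w) :
    ∃ v p, IsW k n v ∧ 1 ≤ p ∧ p ≤ k * n ∧ insW k (n + 1) p v = w := by
  obtain ⟨hA, hB, hC, hD, hE⟩ := hw
  have hL : k * (n + 1) = k * n + k := by ring
  rw [hL] at hA hB hC hD
  have hc := hC (n + 1) (by omega) le_rfl
  set S := (Finset.range (k * n + k)).filter fun i => w i = n + 1 with hS
  have hne : S.Nonempty := Finset.card_pos.1 (by omega)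
  set p := S.min' hne with hpdef
  set q := S.max' hne with hqdef
  have hpS : p ∈ S := S.min'_mem hne
  have hqS : q ∈ S := S.max'_mem hne
  have hmem : ∀ i, i ∈ S ↔ i < k * n + k ∧ w i = n + 1 := by
    intro i; simp [hS]
  have hSeq : S = Finset.Icc p q := by
    ext i
    rw [Finset.mem_Icc]
    constructor
    · intro hi
      exact ⟨S.min'_le i hi, S.le_max' i hi⟩
    · rintro ⟨h1, h2⟩
      rw [hmem] at hpS hqS ⊢
      have h3 := hD p i q h1 h2 hqS.1 (by rw [hpS.2, hqS.2])
      have h4 := hA i (by omega)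
      omega
  have hpq : p ≤ q := S.min'_le q hqS
  have hq : q + 1 = p + k := by
    rw [hSeq, Nat.card_Icc] at hc
    omega
  have hpp := (hmem p).1 hpS
  have hqq := (hmem q).1 hqS
  have hblock : ∀ i, i < k * n + k → (w i = n + 1 ↔ p ≤ i ∧ i < p + k) := by
    intro i hi
    have := hmem i
    rw [hSeq, Finset.mem_Icc] at this
    constructor
    · intro h; have := this.2 ⟨hi, h⟩; omega
    · intro h; exact (this.1 (by omega)).2
  have hp1 : 1 ≤ p := by
    by_contra h
    have : p = 0 := by omega
    rw [this, hE] at hpp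
    omega
  have hpn : p ≤ k * n := by omega
  have hw := eq_insW k (n + 1) p w (fun i h1 h2 => (hblock i (by omega)).2 ⟨h1, h2⟩)
  refine ⟨fun i => w (skip k p i), p, ⟨?_, ?_, ?_, ?_, ?_⟩, hp1, hpn, hw.symm⟩
  · intro i hi
    have hs : skip k p i < k * n + k := (skip_lt hpn).2 hi
    have h1 := hA _ hs
    have h2 := hblock _ hs
    have h3 : ¬ (p ≤ skip k p i ∧ skip k p i < p + k) := by
      simp only [skip]; split_ifs <;> omega
    have : w (skip k p i) ≠ n + 1 := fun h => h3 (h2.1 h)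
    dsimp only
    omega
  · intro i hi
    apply hB
    by_contra h
    have := (skip_lt (k := k) hpn).1 (not_le.1 h)
    omega
  · intro m h1 h2
    rw [← card_skip k (n + 1) p (k * n) m _ hpn (by omega), ← hw]
    exact hC m h1 (by omega)
  · intro i j l hij hjl hl h
    exact hD _ _ _ (skip_le_skip.2 hij) (skip_le_skip.2 hjl) ((skip_lt hpn).2 hl) h
  · have : skip k p 0 = 0 := by simp only [skip]; rw [if_pos (by omega)]
    dsimp only
    rw [this, hE]

/-- The set of ascent-plateaux. -/
def apSet (k L : ℕ) (v : ℕ → ℕ) : Finset ℕ :=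
  (Finset.range L).filter fun i =>
    i + k < L ∧ v i < v (i + 1) ∧ ∀ j < k, v (i + 1 + j) = v (i + 1)

lemma mem_apSet (k L : ℕ) (v : ℕ → ℕ) (i : ℕ) : i ∈ apSet k L v ↔
    i + k < L ∧ v i < v (i + 1) ∧ ∀ j < k, v (i + 1 + j) = v (i + 1) := by
  simp only [apSet, Finset.mem_filter, Finset.mem_range]
  constructor
  · exact fun h => h.2
  · exact fun h => ⟨by omega, h⟩

lemma apWord_eq (k L : ℕ) (v : ℕ → ℕ) : apWord k L v = (apSet k L v).card := rfl

lemma apSet_sep {k L : ℕ} {v : ℕ → ℕ} {i j : ℕ} (hi : i ∈ apSet k L v) (hj : j ∈ apSet k L v)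
    (hij : i < j) : i + k ≤ j := by
  rw [mem_apSet] at hi hj
  by_contra h
  have h1 := hi.2.2 (j - (i + 1)) (by omega)
  have h2 := hi.2.2 (j - i) (by omega)
  have e1 : i + 1 + (j - (i + 1)) = j := by omega
  have e2 : i + 1 + (j - i) = j + 1 := by omega
  rw [e1] at h1
  rw [e2] at h2
  omega

lemma apSet_insW {k N L p : ℕ} {v : ℕ → ℕ} (hk : 1 ≤ k) (h1 : 1 ≤ p) (hp : p ≤ L)
    (hv : ∀ i < L, v i < N) :
    apSet k (L + k) (insW k N p v) =
      insert (p - 1) (((apSet k L v).filter fun i => ¬ (i < p ∧ p ≤ i + k)).image (skip k p)) := by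
  have hlow : ∀ i, i < p → insW k N p v i = v i := fun i hi => by simp [insW, hi]
  have hhigh : ∀ i, p + k ≤ i → insW k N p v i = v (i - k) := fun i hi => by
    simp only [insW]; rw [if_neg (by omega), if_neg (by omega)]
  have hmid : ∀ i, p ≤ i → i < p + k → insW k N p v i = N := insW_block k N p v
  ext i
  rw [mem_apSet]
  simp only [Finset.mem_insert, Finset.mem_image, Finset.mem_filter, mem_apSet]
  rcases lt_trichotomy (i + 1) p with h | h | h
  · -- before
    rw [hlow i (by omega), hlow (i + 1) h]
    constructor
    · rintro ⟨a1, a2, a3⟩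
      have hik : i + k < p := by
        by_contra hc
        have := a3 (p - (i + 1)) (by omega)
        rw [hmid _ (by omega) (by omega)] at this
        have := hv (i + 1) (by omega)
        omega
      refine Or.inr ⟨i, ⟨⟨by omega, a2, fun j hj => ?_⟩, by omega⟩, by
        simp only [skip]; rw [if_pos (by omega)]⟩
      rw [← a3 j hj, hlow _ (by omega)]
    · rintro (h' | ⟨i', ⟨⟨a1, a2, a3⟩, a4⟩, a5⟩)
      · omega
      · have : i' = i := by
          simp only [skip] at a5
          split_ifs at a5 <;> omega
        subst this
        refine ⟨by omega, a2, fun j hj => ?_⟩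
        rw [hlow _ (by omega)]; exact a3 j hj
  · constructor
    · intro _; left; omega
    · intro _
      refine ⟨by omega, ?_, fun j hj => ?_⟩
      · rw [hlow i (by omega), hmid (i + 1) (by omega) (by omega)]
        exact hv i (by omega)
      · rw [hmid _ (by omega) (by omega), hmid _ (by omega) (by omega)]
  · by_cases hi : i < p + k
    · constructor
      · rintro ⟨a1, a2, _⟩
        rw [hmid i (by omega) hi] at a2
        by_cases h' : i + 1 < p + k
        · rw [hmid _ (by omega) h'] at a2; omega
        · rw [hhigh _ (by omega)] at a2
          have := hv (i + 1 - k) (by omega)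
          omega
      · rintro (h' | ⟨i', ⟨⟨a1, a2, a3⟩, a4⟩, a5⟩)
        · omega
        · simp only [skip] at a5
          split_ifs at a5 <;> omega
    · rw [hhigh i (by omega), hhigh (i + 1) (by omega)]
      have e1 : i + 1 - k = i - k + 1 := by omega
      rw [e1]
      constructor
      · rintro ⟨a1, a2, a3⟩
        refine Or.inr ⟨i - k, ⟨⟨by omega, a2, fun j hj => ?_⟩, by omega⟩, by
          simp only [skip]; rw [if_neg (by omega)]; omega⟩
        rw [← a3 j hj, hhigh _ (by omega)]
        congr 1; omega
      · rintro (h' | ⟨i', ⟨⟨a1, a2, a3⟩, a4⟩, a5⟩)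
        · omega
        · have : i' = i - k := by
            simp only [skip] at a5
            split_ifs at a5 <;> omega
          subst this
          refine ⟨by omega, a2, fun j hj => ?_⟩
          rw [hhigh _ (by omega), ← a3 j hj]
          congr 1; omega

/-- Positions covered by ascent-plateaux. -/
def covered (k L : ℕ) (v : ℕ → ℕ) : Finset ℕ :=
  (apSet k L v).biUnion fun i => Finset.Ioc i (i + k)

lemma card_covered (k L : ℕ) (v : ℕ → ℕ) : (covered k L v).card = k * (apSet k L v).card := by
  rw [covered, Finset.card_biUnion]
  · simp [mul_comm]
  · intro i hi j hj hij
    change Disjoint (Finset.Ioc i (i + k)) (Finset.Ioc j (j + k))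
    rw [Finset.disjoint_left]
    intro a ha hb
    rw [Finset.mem_Ioc] at ha hb
    rcases lt_or_gt_of_ne hij with h | h
    · have := apSet_sep hi hj h; omega
    · have := apSet_sep hj hi h; omega

lemma covered_subset (k L : ℕ) (v : ℕ → ℕ) : covered k L v ⊆ Finset.Icc 1 L := by
  intro a ha
  simp only [covered, Finset.mem_biUnion, Finset.mem_Ioc, mem_apSet] at ha
  obtain ⟨i, h, h'⟩ := ha
  rw [Finset.mem_Icc]; omega

lemma ap_insW {k N L p : ℕ} {v : ℕ → ℕ} (hk : 1 ≤ k) (h1 : 1 ≤ p) (hp : p ≤ L)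
    (hv : ∀ i < L, v i < N) :
    (apSet k (L + k) (insW k N p v)).card =
      if p ∈ covered k L v then (apSet k L v).card else (apSet k L v).card + 1 := by
  rw [apSet_insW hk h1 hp hv, Finset.card_insert_of_notMem, Finset.card_image_of_injective _
    (skip_inj k p)]
  · split_ifs with hc
    · simp only [covered, Finset.mem_biUnion, Finset.mem_Ioc] at hc
      obtain ⟨i, hi, h2⟩ := hc
      rw [← Finset.card_erase_add_one hi]
      congr 2
      ext j
      rw [Finset.mem_filter, Finset.mem_erase]
      constructor
      · rintro ⟨hj, h3⟩
        exact ⟨by rintro rfl; omega, hj⟩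
      · rintro ⟨hj, h3⟩
        refine ⟨h3, ?_⟩
        rintro ⟨h4, h5⟩
        rcases lt_or_gt_of_ne hj with h | h
        · have := apSet_sep h3 hi h; omega
        · have := apSet_sep hi h3 h; omega
    · congr 2
      rw [Finset.filter_true_of_mem]
      intro i hi h2
      apply hc
      simp only [covered, Finset.mem_biUnion, Finset.mem_Ioc]
      exact ⟨i, hi, by omega⟩
  · simp only [Finset.mem_image, Finset.mem_filter, not_exists, not_and]
    rintro i ⟨_, h2⟩ h3
    simp only [skip] at h3
    split_ifs at h3 <;> omega

abbrev SP (k n : ℕ) : Type := {w : Fin (k * n) → Fin n // IsKStirling k n w ∧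
        ∀ (h0 : 0 < k * n) (hn0 : 0 < n), w ⟨0, h0⟩ = ⟨0, hn0⟩}

lemma wordOf_lt {k n : ℕ} (w : Fin (k * n) → Fin n) {i : ℕ} (h : i < k * n) :
    wordOf k n w i = (w ⟨i, h⟩ : ℕ) + 1 := by simp [wordOf, h]

lemma wordOf_inj {k n : ℕ} {w w' : Fin (k * n) → Fin n} (h : wordOf k n w = wordOf k n w') :
    w = w' := by
  funext i
  have := congrFun h i.1
  rw [wordOf_lt w i.2, wordOf_lt w' i.2] at this
  apply Fin.ext
  simpa using this

lemma wordOf_isW {k n : ℕ} (hk : 1 ≤ k) (hn : 1 ≤ n) (w : Fin (k * n) → Fin n) :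
    IsW k n (wordOf k n w) ↔ (IsKStirling k n w ∧
        ∀ (h0 : 0 < k * n) (hn0 : 0 < n), w ⟨0, h0⟩ = ⟨0, hn0⟩) := by
  have h0 : 0 < k * n := Nat.mul_pos hk hn
  have hcard : ∀ m : Fin n, ((Finset.range (k * n)).filter fun i => wordOf k n w i = m + 1).card =
      (Finset.univ.filter fun i => w i = m).card := by
    intro m
    symm
    refine Finset.card_bij (fun i _ => i.1) ?_ ?_ ?_
    · intro i hi
      simp only [Finset.mem_filter, Finset.mem_univ, true_and, Finset.mem_range] at hi ⊢
      exact ⟨i.2, by rw [wordOf_lt w i.2, hi]⟩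
    · intro i _ j _ h; exact Fin.ext h
    · intro i hi
      simp only [Finset.mem_filter, Finset.mem_range] at hi
      refine ⟨⟨i, hi.1⟩, ?_, rfl⟩
      have := hi.2
      rw [wordOf_lt w hi.1] at this
      simp only [Finset.mem_filter, Finset.mem_univ, true_and]
      exact Fin.ext (by omega)
  constructor
  · rintro ⟨hA, hB, hC, hD, hE⟩
    refine ⟨⟨?_, ?_⟩, ?_⟩
    · intro m
      rw [← hcard m]
      exact hC _ (by omega) (by omega)
    · intro i j l hij hjl h
      have := hD i j l hij hjl l.2 (by rw [wordOf_lt w i.2, wordOf_lt w l.2, h])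
      rw [wordOf_lt w i.2, wordOf_lt w j.2] at this
      rw [Fin.le_def]
      simpa using this
    · intro _ _
      rw [wordOf_lt w h0] at hE
      exact Fin.ext (by simpa using hE)
  · rintro ⟨⟨hC, hD⟩, hE⟩
    refine ⟨?_, ?_, ?_, ?_, ?_⟩
    · intro i hi
      rw [wordOf_lt w hi]
      have := (w ⟨i, hi⟩).2
      omega
    · intro i hi
      simp only [wordOf]; rw [dif_neg (by omega)]
    · intro m h1 h2
      have := hcard ⟨m - 1, by omega⟩
      rw [hC] at this
      have e : m - 1 + 1 = m := by omega
      simp only [e] at this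
      exact this
    · intro i j l hij hjl hl h
      rw [wordOf_lt w (show i < k * n by omega), wordOf_lt w hl] at h
      rw [wordOf_lt w (show i < k * n by omega), wordOf_lt w (show j < k * n by omega)]
      have := hD ⟨i, by omega⟩ ⟨j, by omega⟩ ⟨l, hl⟩ hij hjl (Fin.ext (by omega))
      rw [Fin.le_def] at this
      omega
    · rw [wordOf_lt w h0, hE h0 (by omega)]

lemma wordOf_surj {k n : ℕ} {v : ℕ → ℕ} (hv : IsW k n v) : ∃ w, wordOf k n w = v := by
  obtain ⟨hA, hB, -⟩ := hv
  refine ⟨fun i => ⟨v i - 1, by have := hA i i.2; omega⟩, ?_⟩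
  funext i
  by_cases hi : i < k * n
  · rw [wordOf_lt _ hi]
    have := hA i hi
    dsimp only
    omega
  · simp only [wordOf]
    rw [dif_neg hi, hB i (by omega)]

def spEquiv {k n : ℕ} (hk : 1 ≤ k) (hn : 1 ≤ n) : SP k n ≃ {v // IsW k n v} :=
  Equiv.ofBijective (fun w => ⟨wordOf k n w.1, (wordOf_isW hk hn w.1).2 w.2⟩) <| by
    constructor
    · intro w w' h
      exact Subtype.ext (wordOf_inj (Subtype.ext_iff.1 h))
    · rintro ⟨v, hv⟩
      obtain ⟨w, rfl⟩ := wordOf_surj hv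
      exact ⟨⟨w, (wordOf_isW hk hn w).1 hv⟩, rfl⟩

lemma spEquiv_val {k n : ℕ} (hk : 1 ≤ k) (hn : 1 ≤ n) (w : SP k n) :
    (spEquiv hk hn w).1 = wordOf k n w.1 := rfl

def stepEquiv {k n : ℕ} (hk : 1 ≤ k) (hn : 1 ≤ n) :
    {v // IsW k n v} × {p // p ∈ Finset.Icc 1 (k * n)} ≃ {v // IsW k (n + 1) v} :=
  Equiv.ofBijective (fun q => ⟨insW k (n + 1) q.2.1 q.1.1,
      insW_isW q.1.2 (Finset.mem_Icc.1 q.2.2).1 (Finset.mem_Icc.1 q.2.2).2⟩) <| by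
    constructor
    · rintro ⟨⟨v, hv⟩, p, hp⟩ ⟨⟨w, hw⟩, q, hq⟩ h
      have := insW_inj hk hv hw (Finset.mem_Icc.1 hp).2 (Finset.mem_Icc.1 hq).2
        (Subtype.ext_iff.1 h)
      simp only [Prod.mk.injEq, Subtype.mk.injEq]
      exact this
    · rintro ⟨w, hw⟩
      obtain ⟨v, p, hv, h1, h2, h3⟩ := insW_surj hk hn hw
      exact ⟨⟨⟨v, hv⟩, p, Finset.mem_Icc.2 ⟨h1, h2⟩⟩, Subtype.ext h3⟩

lemma stepEquiv_val {k n : ℕ} (hk : 1 ≤ k) (hn : 1 ≤ n)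
    (q : {v // IsW k n v} × {p // p ∈ Finset.Icc 1 (k * n)}) :
    (stepEquiv hk hn q).1 = insW k (n + 1) q.2.1 q.1.1 := rfl

/-- Sum over Stirling permutations of a function of `ap`. -/
def wordSum {R : Type} [CommSemiring R] (n k : ℕ) (φ : ℕ → R) : R :=
  ∑ w : SP k n, φ (apStat k n w.1)

lemma word_inner {R : Type} [CommSemiring R] {n k : ℕ} (hk : 1 ≤ k) 
    (φ : ℕ → R) (v : ℕ → ℕ) (hv : ∀ i < k * n, v i < n + 1) :
    ∑ p : {p // p ∈ Finset.Icc 1 (k * n)}, φ (apWord k (k * (n + 1)) (insW k (n + 1) p.1 v)) =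
    (k : R) * ((apWord k (k * n) v : R) * φ (apWord k (k * n) v) +
      ((n - apWord k (k * n) v : ℕ) : R) * φ (apWord k (k * n) v + 1)) := by
  rw [Finset.sum_coe_sort (Finset.Icc 1 (k * n))
    (fun p => φ (apWord k (k * (n + 1)) (insW k (n + 1) p v)))]
  have hL : k * (n + 1) = k * n + k := by ring
  rw [← Finset.sum_sdiff (covered_subset k (k * n) v)]
  have c1 : ∀ p ∈ Finset.Icc 1 (k * n) \ covered k (k * n) v,
      φ (apWord k (k * (n + 1)) (insW k (n + 1) p v)) = φ (apWord k (k * n) v + 1) := by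
    intro p hp
    rw [Finset.mem_sdiff, Finset.mem_Icc] at hp
    rw [hL, apWord_eq, ap_insW hk hp.1.1 hp.1.2 hv, if_neg hp.2, apWord_eq]
  have c2 : ∀ p ∈ covered k (k * n) v,
      φ (apWord k (k * (n + 1)) (insW k (n + 1) p v)) = φ (apWord k (k * n) v) := by
    intro p hp
    have hp' := Finset.mem_Icc.1 (covered_subset _ _ _ hp)
    rw [hL, apWord_eq, ap_insW hk hp'.1 hp'.2 hv, if_pos hp, apWord_eq]
  rw [Finset.sum_congr rfl c1, Finset.sum_congr rfl c2, Finset.sum_const, Finset.sum_const,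
    Finset.card_sdiff_of_subset (covered_subset k (k * n) v), card_covered, Nat.card_Icc,
    ← apWord_eq]
  have : k * n + 1 - 1 - k * apWord k (k * n) v = k * (n - apWord k (k * n) v) := by
    rw [Nat.mul_sub]; rfl
  rw [this]
  simp only [nsmul_eq_mul, Nat.cast_mul]
  ring

lemma wordSum_succ {R : Type} [CommSemiring R] {n k : ℕ} (hk : 1 ≤ k) (hn : 1 ≤ n)
    (φ : ℕ → R) :
    wordSum (n + 1) k φ = wordSum n k fun a => (k : R) * ((a : R) * φ a +
      ((n - a : ℕ) : R) * φ (a + 1)) := by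
  let e := ((spEquiv hk hn).prodCongr (Equiv.refl _)).trans
    ((stepEquiv hk hn).trans (spEquiv hk (by omega : 1 ≤ n + 1)).symm)
  unfold wordSum
  rw [← e.sum_comp, Fintype.sum_prod_type]
  refine Finset.sum_congr rfl fun w _ => ?_
  have hv : ∀ i < k * n, wordOf k n w.1 i < n + 1 := fun i hi => by
    have := ((wordOf_isW hk hn w.1).2 w.2).1 i hi
    omega
  refine Eq.trans ?_ (word_inner hk φ (wordOf k n w.1) hv)
  refine Finset.sum_congr rfl fun p _ => ?_
  congr 1
  rw [apStat]
  congr 1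
  rw [← spEquiv_val hk (by omega : 1 ≤ n + 1)]
  simp only [e, Equiv.trans_apply, Equiv.apply_symm_apply]
  rfl

lemma wordSum_one {R : Type} [CommSemiring R] {k : ℕ} (hk : 1 ≤ k) (φ : ℕ → R) :
    wordSum 1 k φ = φ 0 := by
  unfold wordSum
  have h : ∀ w : Fin (k * 1) → Fin 1, apStat k 1 w = 0 := by
    intro w
    rw [apStat, apWord_eq, Finset.card_eq_zero]
    ext i
    rw [mem_apSet]
    simp
  rw [Fintype.sum_eq_single (⟨fun _ => 0, ⟨?_, ?_⟩, ?_⟩ : SP k 1)]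
  · rw [h]
  · intro w hw
    exact absurd (Subtype.ext (Subsingleton.elim _ _)) hw
  · intro m
    rw [Finset.filter_true_of_mem (fun i _ => Subsingleton.elim _ _)]
    simp
  · intro i j l _ _ _
    exact le_rfl
  · intro _ _; rfl

/-! ### Assembly -/

lemma wordSum_eq_treeSum {R : Type} [CommSemiring R] {k : ℕ} (hk : 1 ≤ k) (n : ℕ) (hn : 2 ≤ n)
    (φ : ℕ → R) : wordSum n k φ = treeSum n k fun a b => φ (a + b) := by
  induction n, hn using Nat.le_induction generalizing φ with
  | base =>
    rw [treeSum_two, wordSum_succ hk le_rfl, wordSum_one hk]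
    simp
  | succ n hn ih =>
    rw [wordSum_succ hk (by omega), ih, treeSum_succ (by omega)]
    unfold treeSum
    refine Finset.sum_congr rfl fun f _ => ?_
    have hab := card_split f.1
    generalize (oldLeaves f.1).card = a at *
    generalize (youngLeaves f.1).card = b at *
    dsimp only
    have e1 : n - (a + b) = a + (n - 2 * a - b) := by omega
    have e2 : a + 1 + b = a + b + 1 := by omega
    rw [e1, e2]
    rcases b with _ | b
    · push_cast
      simp only [Nat.add_zero, Nat.zero_add]
      ring
    · have e3 : a + 1 + (b + 1 - 1) = a + (b + 1) := by omega
      have e4 : a + (b + 1 + 1) = a + (b + 1) + 1 := by omega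
      rw [e3, e4]
      push_cast
      ring

/-- Number of trees with given numbers of old and young leaves. -/
def treeCount (n k a b : ℕ) : ℕ := treeSum n k fun a' b' => if a' = a ∧ b' = b then 1 else 0

lemma treeCount_eq (n k a b : ℕ) : treeCount n k a b =
    ((Finset.univ : Finset {f : Fin n → Option (Fin n × Fin k) // IsTree f}).filter fun f =>
      (oldLeaves f.1).card = a ∧ (youngLeaves f.1).card = b).card := by
  rw [treeCount, treeSum, Finset.card_filter]

lemma treeCount_zero (n k a b : ℕ) (h : n < 2 * a + b) : treeCount n k a b = 0 := by
  rw [treeCount_eq, Finset.card_eq_zero, Finset.filter_eq_empty_iff]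
  intro f _ h'
  have := card_split f.1
  omega

lemma treeSum_add {R : Type} [CommSemiring R] (n k : ℕ) (φ ψ : ℕ → ℕ → R) :
    treeSum n k (fun a b => φ a b + ψ a b) = treeSum n k φ + treeSum n k ψ := by
  simp [treeSum, Finset.sum_add_distrib]

lemma treeSum_mul {R : Type} [CommSemiring R] (n k : ℕ) (c : R) (φ : ℕ → ℕ → R) :
    treeSum n k (fun a b => c * φ a b) = c * treeSum n k φ := by
  simp [treeSum, Finset.mul_sum]

lemma treeCount_succ_zero {n k : ℕ} (hn : 1 ≤ n) (b : ℕ) (h2 : 2 ≤ n) :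
    treeCount (n + 1) k 0 b = 0 := by
  rw [treeCount, treeSum_succ hn, treeSum]
  refine Finset.sum_eq_zero fun f _ => ?_
  beta_reduce
  generalize (oldLeaves f.1).card = a'
  rcases a' with _ | a' <;> simp

lemma treeCount_succ_base {n k : ℕ} (hn : 1 ≤ n) (a : ℕ) :
    treeCount (n + 1) k (a + 1) 0 = k * ((a + 1) * treeCount n k (a + 1) 0
      + treeCount n k a 1 + (n - 2 * a) * treeCount n k a 0) := by
  rw [treeCount, treeSum_succ hn]
  simp only [treeCount, ← treeSum_add, ← treeSum_mul]
  unfold treeSum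
  refine Finset.sum_congr rfl fun f _ => ?_
  dsimp only
  generalize (oldLeaves f.1).card = a'
  generalize (youngLeaves f.1).card = b'
  congr 1
  by_cases h1 : a' = a + 1
  · subst h1
    rcases b' with _ | _ | b' <;> simp
  · by_cases h2 : a' = a
    · subst h2
      rcases b' with _ | _ | b' <;> simp
    · simp [h1, h2]

lemma treeCount_succ {n k : ℕ} (hn : 1 ≤ n) (a b : ℕ) :
    treeCount (n + 1) k (a + 1) (b + 1) = k * ((a + 1) * treeCount n k (a + 1) (b + 1)
      + (b + 2) * treeCount n k a (b + 2) + (a + 1) * treeCount n k (a + 1) b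
      + (n - 2 * a - (b + 1)) * treeCount n k a (b + 1)) := by
  rw [treeCount, treeSum_succ hn]
  simp only [treeCount, ← treeSum_add, ← treeSum_mul]
  unfold treeSum
  refine Finset.sum_congr rfl fun f _ => ?_
  dsimp only
  generalize (oldLeaves f.1).card = a'
  generalize (youngLeaves f.1).card = b'
  have hb : (b' - 1 = b + 1) ↔ b' = b + 2 := by omega
  congr 1
  by_cases h1 : a' = a + 1
  · subst h1
    simp [hb]
  · by_cases h2 : a' = a
    · subst h2
      by_cases h3 : b' = b + 2
      · subst h3; simp
      · by_cases h4 : b' = b + 1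
        · subst h4; simp
        · simp [h3, h4, hb]
    · simp [h1, h2]

lemma treeCount_choose {k : ℕ} (n : ℕ) (hn : 2 ≤ n) (a b : ℕ) :
    treeCount n k a b = treeCount n k a 0 * (n - 2 * a).choose b ∧ treeCount n k 0 b = 0 := by
  induction n, hn using Nat.le_induction generalizing a b with
  | base =>
    rw [treeCount, treeCount, treeCount, treeSum_two, treeSum_two, treeSum_two]
    refine ⟨?_, by simp⟩
    by_cases h : a = 1
    · subst h
      rcases b with _ | b <;> simp
    · have : ¬ (1 = a) := fun h' => h h'.symm
      simp [this]
  | succ n hn ih =>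
    have h0 := fun b => treeCount_succ_zero (k := k) (show 1 ≤ n by omega) b hn
    refine ⟨?_, h0 b⟩
    rcases a with _ | a
    · simp [h0]
    rcases b with _ | b
    · simp
    rcases lt_or_ge (n + 1) (2 * (a + 1)) with hlt | hge
    · rw [treeCount_zero _ _ _ _ (by omega), treeCount_zero _ _ _ _ (by omega)]; simp
    rw [treeCount_succ_base (by omega), treeCount_succ (by omega), (ih (a + 1) (b + 1)).1,
      (ih a (b + 2)).1, (ih (a + 1) b).1, (ih a (b + 1)).1, (ih a 1).1]
    generalize treeCount n k a 0 = G
    have hG' : n < 2 * (a + 1) → treeCount n k (a + 1) 0 = 0 := fun h =>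
      treeCount_zero _ _ _ _ (by omega)
    generalize treeCount n k (a + 1) 0 = G' at *
    obtain ⟨m, hm⟩ : ∃ m, n = 2 * a + 1 + m := ⟨n - (2 * a + 1), by omega⟩
    subst hm
    have e1 : 2 * a + 1 + m - 2 * a = m + 1 := by omega
    have e2 : 2 * a + 1 + m + 1 - 2 * (a + 1) = m := by omega
    rw [e1, e2]
    have id1 : (b + 2) * (m + 1).choose (b + 2) = (m + 1) * m.choose (b + 1) := by
      have := Nat.add_one_mul_choose_eq m (b + 1)
      linarith
    have id2 : (m + 1 - (b + 1)) * (m + 1).choose (b + 1) = (m + 1) * m.choose (b + 1) := by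
      have h1 := Nat.choose_succ_right_eq (m + 1) (b + 1)
      have h2 := Nat.add_one_mul_choose_eq m (b + 1)
      nlinarith
    rcases m with _ | m
    · have : G' = 0 := hG' (by omega)
      subst this
      have : Nat.choose 1 (b + 2) = 0 := Nat.choose_eq_zero_of_lt (by omega)
      simp [this]
    · have e3 : 2 * a + 1 + (m + 1) - 2 * (a + 1) = m := by omega
      rw [e3]
      have id3 := Nat.choose_succ_succ m b
      simp only [Nat.choose_one_right]
      simp only [Nat.succ_eq_add_one] at id3
      linear_combination k * G * id1 + k * G * id2 - k * (a + 1) * G' * id3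

lemma lleaf_eq {n k : ℕ} (hn : 2 ≤ n) (f : Fin n → Option (Fin n × Fin k)) (hf : IsTree f) :
    lleafStat f = (oldLeaves f).card + (youngLeaves f).card := by
  rw [← Finset.card_union_of_disjoint (disj_OY f), lleafStat]
  congr 1
  ext v
  rw [Finset.mem_union, mem_oldLeaves, mem_youngLeaves, Finset.mem_filter]
  have h := root_hasChild hn f hf v
  constructor
  · rintro ⟨_, hc⟩
    have hnr : ∃ y s, f v = some (y, s) := by
      rcases h' : f v with _ | ⟨y, s⟩
      · exact absurd (h h') hc
      · exact ⟨y, s, rfl⟩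
    by_cases ho : oldNode f v
    · exact Or.inl ⟨ho, hc⟩
    · exact Or.inr ⟨⟨hnr, ho⟩, hc⟩
  · rintro (h | h)
    · exact ⟨Finset.mem_univ _, h.2⟩
    · exact ⟨Finset.mem_univ _, h.2⟩

lemma noYoung_iff {n k : ℕ} (f : Fin n → Option (Fin n × Fin k)) :
    NoYoungLeaf f ↔ (youngLeaves f).card = 0 := by
  rw [Finset.card_eq_zero, youngLeaves, Finset.filter_eq_empty_iff]
  simp [NoYoungLeaf]

lemma gamma_card {n k : ℕ} (hn : 2 ≤ n) (i : ℕ) :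
    Nat.card {f : Fin n → Option (Fin n × Fin k) //
            IsTree f ∧ lleafStat f = i ∧ NoYoungLeaf f} = treeCount n k i 0 := by
  rw [treeCount_eq, ← Fintype.card_subtype, ← Nat.card_eq_fintype_card]
  refine Nat.card_congr ⟨fun f => ⟨⟨f.1, f.2.1⟩, ?_⟩, fun f => ⟨f.1.1, f.1.2, ?_⟩,
    fun f => rfl, fun f => rfl⟩
  · have h1 := (noYoung_iff f.1).1 f.2.2.2
    have h2 := lleaf_eq hn f.1 f.2.1
    have h3 := f.2.2.1
    exact ⟨by dsimp only; omega, h1⟩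
  · have h1 := f.2
    have h2 := lleaf_eq hn f.1.1 f.1.2
    exact ⟨by omega, (noYoung_iff f.1.1).2 h1.2⟩

lemma treeSum_counts {R : Type} [CommSemiring R] {n k : ℕ} (hn : 2 ≤ n) (φ : ℕ → ℕ → R) :
    treeSum n k φ = ∑ a ∈ Finset.Icc 1 (n / 2), ∑ b ∈ Finset.range (n - 2 * a + 1),
      (treeCount n k a b : R) * φ a b := by
  have hpos : ∀ f : {f : Fin n → Option (Fin n × Fin k) // IsTree f},
      (oldLeaves f.1).card ≠ 0 := by
    intro f h
    have h1 := (treeCount_choose (k := k) n hn 0 (youngLeaves f.1).card).2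
    rw [treeCount_eq, Finset.card_eq_zero, Finset.filter_eq_empty_iff] at h1
    exact h1 (Finset.mem_univ f) ⟨h, rfl⟩
  have hcast : ∀ a b, (treeCount n k a b : R) * φ a b =
      ∑ f : {f : Fin n → Option (Fin n × Fin k) // IsTree f},
        if (oldLeaves f.1).card = a ∧ (youngLeaves f.1).card = b then φ a b else 0 := by
    intro a b
    rw [treeCount_eq, ← Finset.sum_filter, Finset.sum_const, nsmul_eq_mul]
  simp only [hcast]
  rw [Finset.sum_congr rfl fun a _ => Finset.sum_comm, Finset.sum_comm]
  unfold treeSum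
  refine Finset.sum_congr rfl fun f _ => ?_
  have h1 := hpos f
  have h2 := card_split f.1
  rw [Finset.sum_eq_single (oldLeaves f.1).card, Finset.sum_eq_single (youngLeaves f.1).card]
  · simp
  · intro b _ hb
    rw [if_neg (fun h => hb h.2.symm)]
  · intro h
    rw [Finset.mem_range] at h
    omega
  · intro a _ ha
    refine Finset.sum_eq_zero fun b _ => ?_
    rw [if_neg (fun h => ha h.1.symm)]
  · intro h
    rw [Finset.mem_Icc] at h
    omega

/-- For `n ≥ 2`, `k ≥ 1`, the polynomial `c_n^{(k)}(x) = Σ_{π ∈ Q̃_n(k)} x^{ap(π)}`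
(summed over `k`-Stirling permutations of order `n` with first letter `1`) is
γ-positive: `c_n^{(k)}(x) = Σ_{i=1}^{⌊n/2⌋} γ̃_{n,k,i} x^i (1+x)^{n−2i}` where
`γ̃_{n,k,i}` counts increasing pruned even `k`-ary trees on `{1,…,n}` with `i` labeled
leaves and no young leaves. -/
theorem c_poly_gamma_positive (n k : ℕ) (hn : 2 ≤ n) (hk : 1 ≤ k) :
    (∑ w : {w : Fin (k * n) → Fin n // IsKStirling k n w ∧
        ∀ (h0 : 0 < k * n) (hn0 : 0 < n), w ⟨0, h0⟩ = ⟨0, hn0⟩},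
      (X : Polynomial ℝ) ^ apStat k n w.1) =
    ∑ i ∈ Finset.Icc 1 (n / 2),
      C ((Nat.card {f : Fin n → Option (Fin n × Fin k) //
            IsTree f ∧ lleafStat f = i ∧ NoYoungLeaf f} : ℕ) : ℝ) *
        X ^ i * (1 + X) ^ (n - 2 * i) := by
  have h := wordSum_eq_treeSum hk n hn (fun a => (X : Polynomial ℝ) ^ a)
  rw [wordSum] at h
  rw [h, treeSum_counts hn]
  refine Finset.sum_congr rfl fun i _ => ?_
  rw [gamma_card hn, add_comm (1 : Polynomial ℝ) X, add_pow, Finset.mul_sum]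
  refine Finset.sum_congr rfl fun b _ => ?_
  rw [(treeCount_choose (k := k) n hn i b).1]
  simp only [one_pow, mul_one, Nat.cast_mul, map_natCast, pow_add]
  ring

end
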